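/- Let D = (V, E; c; s, t) be a flow network in which every arc belongs to at least one s-t path. If the flow game Γ_D is convex, then the set 𝒫 of all s-t paths constitutes an arc cover of D, i.e., ⋃_{P ∈ 𝒫} P = E, and the paths in 𝒫 are pairwise disjoint with respect to the bottleneck set B, i.e., no two distinct s-t paths share an arc of B. Moreover, every s-t path contains a bottleneck arc b ∈ B such that it is the unique s-t path through b. -/

import Mathlib

open scoped Classical
open Finset

noncomputable section

/-- The arcs (consecutive vertex pairs) of a vertex list. -/
def arcsOf {V : Type*} [DecidableEq V] (vs : List V) : Finset (V × V) :=
  (vs.zip vs.tail).toFinset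

/-- `vs` is the vertex list of a directed path from `a` to `b` using arcs of `E`,
with pairwise distinct vertices. -/
def IsPathList {V : Type*} (E : Finset (V × V)) (a b : V) (vs : List V) : Prop :=
  vs.Nodup ∧ vs.head? = some a ∧ vs.getLast? = some b ∧
    vs.Chain' (fun x y => (x, y) ∈ E)

/-- `P` is (the arc set of) an `s`-`t` path in the network with arc set `E`. -/
def IsSTPath {V : Type*} [DecidableEq V] (E : Finset (V × V)) (s t : V)
    (P : Finset (V × V)) : Prop :=
  ∃ vs : List V, IsPathList E s t vs ∧ P = arcsOf vs

/-- The capacity of a path (arc set): the minimum capacity of its arcs. -/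
def pathCap {V : Type*} (c : V × V → ℝ) (P : Finset (V × V)) : ℝ :=
  sInf (c '' (P : Set (V × V)))

/-- `e` is a bottleneck arc of some `s`-`t` path, i.e. `e ∈ B`. -/
def IsBottleneck {V : Type*} [DecidableEq V] (E : Finset (V × V)) (c : V × V → ℝ)
    (s t : V) (e : V × V) : Prop :=
  ∃ P : Finset (V × V), IsSTPath E s t P ∧ e ∈ P ∧ c e = pathCap c P

/-- The finite set `𝒫` of all `s`-`t` paths (as arc sets). -/
def stPaths {V : Type*} [DecidableEq V] (E : Finset (V × V)) (s t : V) :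
    Finset (Finset (V × V)) :=
  E.powerset.filter (fun P => IsSTPath E s t P)

/-- The value of a flow `f`: net flow out of the source `s`. -/
def flowValue {V : Type*} [DecidableEq V] (E : Finset (V × V)) (s : V)
    (f : V × V → ℝ) : ℝ :=
  ∑ e ∈ E.filter (fun e => e.1 = s), f e - ∑ e ∈ E.filter (fun e => e.2 = s), f e

/-- `f` is a feasible flow on the coalition `S`. -/
def IsFeasibleFlow {V : Type*} [DecidableEq V] (E : Finset (V × V)) (c : V × V → ℝ)
    (s t : V) (S : Finset (V × V)) (f : V × V → ℝ) : Prop :=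
  (∀ e ∈ E, 0 ≤ f e ∧ f e ≤ c e) ∧
  (∀ e, e ∉ S → f e = 0) ∧
  (∀ v, v ≠ s → v ≠ t →
    ∑ e ∈ E.filter (fun e => e.2 = v), f e = ∑ e ∈ E.filter (fun e => e.1 = v), f e)

/-- `γ` is the characteristic function of the flow game on `D = (V,E;c;s,t)`:
for each coalition `S ⊆ E`, `γ S` is the maximum value of a feasible flow on `S`. -/
def IsFlowGame {V : Type*} [DecidableEq V] (E : Finset (V × V)) (c : V × V → ℝ)
    (s t : V) (γ : Finset (V × V) → ℝ) : Prop :=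
  ∀ S : Finset (V × V), S ⊆ E →
    IsGreatest {x : ℝ | ∃ f, IsFeasibleFlow E c s t S f ∧ flowValue E s f = x} (γ S)

/-- The cooperative game `γ` with player set `E` is convex (supermodular). -/
def GameConvex {V : Type*} [DecidableEq V] (E : Finset (V × V))
    (γ : Finset (V × V) → ℝ) : Prop :=
  ∀ e ∈ E, ∀ S T : Finset (V × V), S ⊆ T → T ⊆ E.erase e →
    γ (insert e S) - γ S ≤ γ (insert e T) - γ T

/-- The directed graph with arc set `E` contains a directed cycle. -/
def HasDirectedCycle {V : Type*} (E : Finset (V × V)) : Prop :=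
  ∃ (v : V) (vs : List V), (v :: vs).Nodup ∧
    (v :: vs).Chain' (fun x y => (x, y) ∈ E) ∧
    ((v :: vs).getLast (List.cons_ne_nil v vs), v) ∈ E

/-!
For a coalition `X` let `w(X)` be the sum of the capacities of all `s`-`t` paths inside `X`.
Decomposing a maximum flow on `X` into paths gives `γ(X) ≤ w(X)`. Convexity gives the reverse
inequality, by induction on `X`: if `X` has two arcs `e ≠ e'` leaving a common vertex, then no path
uses both, so `w(X) + w(X - e - e') = w(X - e) + w(X - e')`, while `γ` is supermodular; and if `X`
has no such pair, it contains at most one `s`-`t` path. Hence `γ(E) = w(E)`, so the decomposition of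
a maximum flow on `E` saturates every path: the capacities of all the paths through an arc `b` sum
to at most `c(b)`. When `b` is a bottleneck of one of them, positivity leaves no room for another.
-/

section

variable {V : Type*} {E X : Finset (V × V)} {c f : V × V → ℝ} {s t a b v : V} {l l' : List V}
  {P Q : Finset (V × V)}

/-! ### Path capacities and flows along a path -/

theorem pathCap_le {e : V × V} (he : e ∈ P) : pathCap c P ≤ c e :=
  csInf_le (P.finite_toSet.image c).bddBelow (Set.mem_image_of_mem c he)

theorem exists_eq_pathCap (c : V × V → ℝ) (hP : P.Nonempty) : ∃ e ∈ P, c e = pathCap c P :=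
  (hP.to_set.image c).csInf_mem (P.finite_toSet.image c)

theorem pathCap_nonneg (hc : ∀ e ∈ P, 0 ≤ c e) : 0 ≤ pathCap c P :=
  Real.sInf_nonneg (Set.forall_mem_image.2 hc)

theorem pathCap_pos (hP : P.Nonempty) (hc : ∀ e ∈ P, 0 < c e) : 0 < pathCap c P := by
  obtain ⟨e, he, hce⟩ := exists_eq_pathCap c hP
  exact hce ▸ hc e he

/-- The flow that sends `r` units along the path with arc set `P`; such flows are the summands of
a flow decomposition. -/
def pathFlow (r : ℝ) (P : Finset (V × V)) : V × V → ℝ :=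
  (P : Set (V × V)).indicator fun _ => r

theorem pathFlow_of_mem {e : V × V} (r : ℝ) (he : e ∈ P) : pathFlow r P e = r :=
  Set.indicator_of_mem (mem_coe.2 he) _

theorem pathFlow_of_notMem {e : V × V} (r : ℝ) (he : e ∉ P) : pathFlow r P e = 0 :=
  Set.indicator_of_notMem (mt mem_coe.1 he) _

theorem sub_pathFlow_pathCap_nonneg (hf : ∀ e ∈ E, 0 ≤ f e) :
    ∀ e ∈ E, 0 ≤ (f - pathFlow (pathCap f P) P) e := by
  intro e he
  rw [Pi.sub_apply]
  by_cases h : e ∈ P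
  · simpa [pathFlow_of_mem _ h] using pathCap_le h
  · simpa [pathFlow_of_notMem _ h] using hf e he

theorem filter_sub_pathFlow_pathCap_ssubset (hPE : P ⊆ {e ∈ E | 0 < f e}) (hP : P.Nonempty) :
    {e ∈ E | 0 < (f - pathFlow (pathCap f P) P) e} ⊂ {e ∈ E | 0 < f e} := by
  obtain ⟨e₀, he₀, hfe₀⟩ := exists_eq_pathCap f hP
  refine (ssubset_iff_of_subset fun e he => ?_).2 ⟨e₀, hPE he₀, fun h => ?_⟩
  · by_cases h : e ∈ P
    · exact hPE h
    · simpa [pathFlow_of_notMem _ h] using he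
  · simp [pathFlow_of_mem _ he₀, hfe₀] at h

/-! ### Vertex lists of paths -/

theorem isPathList_iff :
    IsPathList E a b l ↔ l.Nodup ∧ l.head? = some a ∧ l.getLast? = some b ∧
      l.IsChain fun x y => (x, y) ∈ E :=
  Iff.rfl

theorem not_isPathList_nil : ¬ IsPathList E a b [] := by
  simp [isPathList_iff]

theorem isPathList_singleton : IsPathList E a b [v] ↔ v = a ∧ v = b := by
  simp [isPathList_iff]

theorem isPathList_cons_cons {x y : V} :
    IsPathList E a b (x :: y :: l) ↔
      x = a ∧ x ∉ y :: l ∧ (x, y) ∈ E ∧ IsPathList E y b (y :: l) := by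
  simp only [isPathList_iff, List.nodup_cons (a := x), List.head?_cons, List.getLast?_cons_cons,
    List.isChain_cons_cons, Option.some.injEq]
  tauto

theorem IsPathList.eq_singleton (h : IsPathList E a a l) : l = [a] := by
  match l, h with
  | [], h => exact absurd h not_isPathList_nil
  | [x], h => rw [(isPathList_singleton.1 h).1]
  | x :: y :: l, h =>
    obtain ⟨rfl, hx, -, -, -, hlast, -⟩ := isPathList_cons_cons.1 h
    exact absurd (List.mem_of_getLast? hlast) hx

theorem IsPathList.eq_of_injOn_fst (hE : Set.InjOn Prod.fst (E : Set (V × V)))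
    (h : IsPathList E a b l) (h' : IsPathList E a b l') : l = l' := by
  induction l generalizing a l' with
  | nil => exact absurd h not_isPathList_nil
  | cons x l ih =>
    match l, l', h, h' with
    | _, [], _, h' => exact absurd h' not_isPathList_nil
    | [], l', h, h' =>
      obtain ⟨rfl, rfl⟩ := isPathList_singleton.1 h
      exact h'.eq_singleton.symm
    | l, [x'], h, h' =>
      obtain ⟨rfl, rfl⟩ := isPathList_singleton.1 h'
      exact h.eq_singleton
    | y :: l, x' :: y' :: l', h, h' =>
      obtain ⟨rfl, -, hxy, hl⟩ := isPathList_cons_cons.1 h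
      obtain ⟨rfl, -, hxy', hl'⟩ := isPathList_cons_cons.1 h'
      obtain rfl : y = y' := congrArg Prod.snd (hE hxy hxy' rfl)
      rw [ih hl hl']

theorem IsPathList.cons (hva : (v, a) ∈ E) (hv : v ∉ l) (h : IsPathList E a b l) :
    IsPathList E v b (v :: l) := by
  match l, h with
  | [], h => exact absurd h not_isPathList_nil
  | x :: l, h =>
    obtain rfl : x = a := by simpa using h.2.1
    exact isPathList_cons_cons.2 ⟨rfl, hv, hva, h⟩

theorem IsPathList.of_append (h : IsPathList E a b (l ++ v :: l')) :
    IsPathList E v b (v :: l') := by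
  obtain ⟨hnodup, -, hlast, hchain⟩ := h
  exact ⟨hnodup.of_append_right, rfl, by simpa [List.getLast?_append] using hlast,
    hchain.right_of_append⟩

theorem exists_isPathList_of_reflTransGen
    (h : Relation.ReflTransGen (fun x y => (x, y) ∈ E) a b) : ∃ l, IsPathList E a b l := by
  induction h using Relation.ReflTransGen.head_induction_on with
  | refl => exact ⟨[b], isPathList_singleton.2 ⟨rfl, rfl⟩⟩
  | @head v a hva _ ih =>
    obtain ⟨l, hl⟩ := ih
    by_cases hv : v ∈ l
    · obtain ⟨l₁, l₂, rfl⟩ := List.append_of_mem hv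
      exact ⟨v :: l₂, hl.of_append⟩
    · exact ⟨v :: l, hl.cons hva hv⟩

/-! ### Arc sets of paths -/

variable [DecidableEq V]

theorem arcsOf_singleton (v : V) : arcsOf [v] = ∅ := by
  simp [arcsOf]

theorem arcsOf_cons_cons (x y : V) (l : List V) :
    arcsOf (x :: y :: l) = insert (x, y) (arcsOf (y :: l)) := by
  simp [arcsOf]

theorem fst_mem_of_mem_arcsOf {e : V × V} (he : e ∈ arcsOf l) : e.1 ∈ l :=
  (List.of_mem_zip (List.mem_toFinset.1 he)).1

theorem isChain_iff_arcsOf_subset (l : List V) :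
    l.IsChain (fun x y => (x, y) ∈ E) ↔ arcsOf l ⊆ E := by
  match l with
  | [] => simp [arcsOf]
  | [x] => simp [arcsOf]
  | x :: y :: l =>
    rw [List.isChain_cons_cons, arcsOf_cons_cons, insert_subset_iff,
      isChain_iff_arcsOf_subset (y :: l)]

theorem injOn_fst_arcsOf (h : l.Nodup) : Set.InjOn Prod.fst (arcsOf l : Set (V × V)) := by
  induction l with
  | nil => simp [arcsOf]
  | cons x l ih =>
    obtain ⟨hx, hl⟩ := List.nodup_cons.1 h
    rcases l with _ | ⟨y, l⟩
    · simp [arcsOf]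
    have hfresh : ∀ e ∈ arcsOf (y :: l), e.1 ≠ x := by
      rintro e he rfl
      exact hx (fst_mem_of_mem_arcsOf he)
    rw [arcsOf_cons_cons, coe_insert, Set.injOn_insert fun he => hfresh _ he rfl]
    exact ⟨ih hl, fun ⟨e, he, hex⟩ => hfresh e he hex⟩

theorem IsSTPath.subset (hP : IsSTPath E s t P) : P ⊆ E := by
  obtain ⟨l, ⟨-, -, -, hchain⟩, rfl⟩ := hP
  exact (isChain_iff_arcsOf_subset l).1 hchain

theorem IsSTPath.injOn_fst (hP : IsSTPath E s t P) : Set.InjOn Prod.fst (P : Set (V × V)) := by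
  obtain ⟨l, hl, rfl⟩ := hP
  exact injOn_fst_arcsOf hl.1

theorem IsSTPath.nonempty (hst : s ≠ t) (hP : IsSTPath E s t P) : P.Nonempty := by
  obtain ⟨l, hl, rfl⟩ := hP
  match l, hl with
  | [], hl => exact absurd hl not_isPathList_nil
  | [x], hl =>
    obtain ⟨rfl, rfl⟩ := isPathList_singleton.1 hl
    exact absurd rfl hst
  | x :: y :: l, _ => exact arcsOf_cons_cons x y l ▸ insert_nonempty _ _

theorem isSTPath_iff_of_subset (hXE : X ⊆ E) :
    IsSTPath X s t P ↔ IsSTPath E s t P ∧ P ⊆ X := by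
  constructor
  · intro hP
    refine ⟨?_, hP.subset⟩
    obtain ⟨l, ⟨hnodup, hhead, hlast, hchain⟩, rfl⟩ := hP
    exact ⟨l, ⟨hnodup, hhead, hlast, hchain.imp fun _ _ h => hXE h⟩, rfl⟩
  · rintro ⟨⟨l, ⟨hnodup, hhead, hlast, -⟩, rfl⟩, hPX⟩
    exact ⟨l, ⟨hnodup, hhead, hlast, (isChain_iff_arcsOf_subset l).2 hPX⟩, rfl⟩

theorem mem_stPaths : P ∈ stPaths E s t ↔ IsSTPath E s t P := by
  simp only [stPaths, mem_filter, mem_powerset, and_iff_right_iff_imp]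
  exact IsSTPath.subset

theorem stPaths_subsingleton_of_injOn_fst (hE : Set.InjOn Prod.fst (E : Set (V × V))) :
    (stPaths E s t : Set (Finset (V × V))).Subsingleton := by
  intro P hP Q hQ
  obtain ⟨l, hl, rfl⟩ := mem_stPaths.1 hP
  obtain ⟨l', hl', rfl⟩ := mem_stPaths.1 hQ
  rw [hl.eq_of_injOn_fst hE hl']

theorem mem_stPaths_erase {e : V × V} :
    P ∈ stPaths (E.erase e) s t ↔ P ∈ stPaths E s t ∧ e ∉ P := by
  simp only [mem_stPaths, isSTPath_iff_of_subset (erase_subset e E), subset_erase]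
  exact ⟨fun ⟨hP, _, he⟩ => ⟨hP, he⟩, fun ⟨hP, he⟩ => ⟨hP, hP.subset, he⟩⟩

theorem biUnion_stPaths_eq
    (hcover : ∀ e ∈ E, ∃ P : Finset (V × V), IsSTPath E s t P ∧ e ∈ P) :
    (stPaths E s t).biUnion (fun P => P) = E := by
  refine Subset.antisymm (biUnion_subset.2 fun P hP => (mem_stPaths.1 hP).subset) fun e he => ?_
  obtain ⟨P, hP, heP⟩ := hcover e he
  exact mem_biUnion.2 ⟨P, mem_stPaths.2 hP, heP⟩

/-- The sum of the capacities of all `s`-`t` paths contained in `X`, the candidate for the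
worth `γ X` of the coalition `X` in a convex flow game. -/
def totalPathCap (c : V × V → ℝ) (s t : V) (X : Finset (V × V)) : ℝ :=
  ∑ P ∈ stPaths X s t, pathCap c P

theorem totalPathCap_add_erase_erase {e e' : V × V} (hne : e ≠ e') (hfst : e.1 = e'.1) :
    totalPathCap c s t X + totalPathCap c s t ((X.erase e).erase e') =
      totalPathCap c s t (X.erase e) + totalPathCap c s t (X.erase e') := by
  have hnot_both : ∀ P ∈ stPaths X s t, e ∉ P ∨ e' ∉ P := fun P hP =>
    not_and_or.1 fun ⟨h, h'⟩ => hne ((mem_stPaths.1 hP).injOn_fst h h' hfst)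
  have hunion : stPaths (X.erase e) s t ∪ stPaths (X.erase e') s t = stPaths X s t := by
    ext P
    simp only [mem_union, mem_stPaths_erase, ← and_or_left, and_iff_left_iff_imp]
    exact hnot_both P
  have hinter : stPaths (X.erase e) s t ∩ stPaths (X.erase e') s t =
      stPaths ((X.erase e).erase e') s t := by
    ext P
    simp only [mem_inter, mem_stPaths_erase]
    tauto
  unfold totalPathCap
  rw [← hunion, ← hinter, sum_union_inter]

/-! ### Net outflow: `flowValue E v f` at an arbitrary vertex `v` -/

theorem flowValue_add (E : Finset (V × V)) (v : V) (f g : V × V → ℝ) :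
    flowValue E v (f + g) = flowValue E v f + flowValue E v g := by
  simp only [flowValue, Pi.add_apply, sum_add_distrib]
  ring

theorem flowValue_single {e : V × V} (he : e ∈ E) (v : V) (r : ℝ) :
    flowValue E v (Pi.single e r) = (Pi.single e.1 r : V → ℝ) v - (Pi.single e.2 r : V → ℝ) v := by
  simp [flowValue, Pi.single_apply, he, eq_comm]

theorem flowValue_eq_of_subset (hXE : X ⊆ E) (hf : ∀ e ∉ X, f e = 0) (v : V) :
    flowValue X v f = flowValue E v f := by
  unfold flowValue
  congr 1 <;>
  exact sum_subset (filter_subset_filter _ hXE) fun e he heX =>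
    hf e fun h => heX (mem_filter.2 ⟨h, (mem_filter.1 he).2⟩)

theorem sum_flowValue (E : Finset (V × V)) (f : V × V → ℝ) (A : Finset V) :
    ∑ v ∈ A, flowValue E v f = ∑ e ∈ E with e.1 ∈ A, f e - ∑ e ∈ E with e.2 ∈ A, f e := by
  simp only [flowValue, sum_sub_distrib, sum_fiberwise_eq_sum_filter]

theorem sum_flowValue_nonpos_of_closed {A : Finset V} (hf : ∀ e ∈ E, 0 ≤ f e)
    (hA : ∀ e ∈ E, 0 < f e → e.1 ∈ A → e.2 ∈ A) : ∑ v ∈ A, flowValue E v f ≤ 0 := by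
  rw [sum_flowValue, sub_nonpos, sum_filter, sum_filter]
  refine sum_le_sum fun e he => ?_
  rcases (hf e he).eq_or_lt with hzero | hpos
  · simp [← hzero]
  · have := hA e he hpos
    split_ifs <;> simp_all [hpos.le]

theorem exists_isSTPath_of_flowValue_pos (hf : ∀ e ∈ E, 0 ≤ f e)
    (hcons : ∀ v, v ≠ s → v ≠ t → flowValue E v f = 0) (hpos : 0 < flowValue E s f) :
    ∃ P, IsSTPath {e ∈ E | 0 < f e} s t P := by
  suffices hreach : Relation.ReflTransGen (fun x y => (x, y) ∈ {e ∈ E | 0 < f e}) s t by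
    obtain ⟨l, hl⟩ := exists_isPathList_of_reflTransGen hreach
    exact ⟨arcsOf l, l, hl, rfl⟩
  by_contra hunreach
  let A : Finset V := {v ∈ insert s (E.image Prod.snd) |
    Relation.ReflTransGen (fun x y => (x, y) ∈ {e ∈ E | 0 < f e}) s v}
  have hsA : s ∈ A := mem_filter.2 ⟨mem_insert_self _ _, .refl⟩
  have htA : t ∉ A := fun h => hunreach (mem_filter.1 h).2
  have hclosed : ∀ e ∈ E, 0 < f e → e.1 ∈ A → e.2 ∈ A := fun e he hfe h =>
    mem_filter.2 ⟨mem_insert_of_mem (mem_image_of_mem _ he),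
      (mem_filter.1 h).2.tail (mem_filter.2 ⟨he, hfe⟩)⟩
  have hsum : ∑ v ∈ A, flowValue E v f = flowValue E s f :=
    sum_eq_single_of_mem s hsA fun v hv hvs => hcons v hvs fun h => htA (h ▸ hv)
  exact hpos.not_ge (hsum ▸ sum_flowValue_nonpos_of_closed hf hclosed)

/-! ### Net outflow of path flows -/

theorem pathFlow_insert {e : V × V} (r : ℝ) (he : e ∉ P) :
    pathFlow r (insert e P) = Pi.single e r + pathFlow r P := by
  ext e'
  by_cases h : e' = e
  · subst h
    simp [pathFlow, he]
  · simp [pathFlow, Set.indicator_apply, h]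

theorem IsPathList.flowValue_pathFlow (h : IsPathList E a b l) (v : V) (r : ℝ) :
    flowValue E v (pathFlow r (arcsOf l)) =
      (Pi.single a r : V → ℝ) v - (Pi.single b r : V → ℝ) v := by
  induction l generalizing a with
  | nil => exact absurd h not_isPathList_nil
  | cons x l ih =>
    rcases l with _ | ⟨y, l⟩
    · obtain ⟨rfl, rfl⟩ := isPathList_singleton.1 h
      simp [flowValue, pathFlow, arcsOf_singleton]
    obtain ⟨rfl, hx, hxy, hl⟩ := isPathList_cons_cons.1 h
    have hfresh : (x, y) ∉ arcsOf (y :: l) := fun h => hx (fst_mem_of_mem_arcsOf h)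
    rw [arcsOf_cons_cons, pathFlow_insert r hfresh, flowValue_add, flowValue_single hxy, ih hl]
    ring

theorem IsSTPath.flowValue_pathFlow (hP : IsSTPath E s t P) (v : V) (r : ℝ) :
    flowValue E v (pathFlow r P) = (Pi.single s r : V → ℝ) v - (Pi.single t r : V → ℝ) v := by
  obtain ⟨l, hl, rfl⟩ := hP
  exact hl.flowValue_pathFlow v r

theorem IsSTPath.flowValue_sub_pathFlow (hP : IsSTPath E s t P) (f : V × V → ℝ) (v : V) (r : ℝ) :
    flowValue E v (f - pathFlow r P) =
      flowValue E v f - ((Pi.single s r : V → ℝ) v - (Pi.single t r : V → ℝ) v) := by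
  rw [eq_sub_iff_add_eq, ← hP.flowValue_pathFlow, ← flowValue_add, sub_add_cancel]

theorem IsSTPath.isFeasibleFlow_pathFlow (hXE : X ⊆ E) (hc : ∀ e ∈ E, 0 ≤ c e)
    (hP : IsSTPath X s t P) : IsFeasibleFlow E c s t X (pathFlow (pathCap c P) P) := by
  refine ⟨fun e he => ?_, fun e he => pathFlow_of_notMem _ fun h => he (hP.subset h),
    fun v hvs hvt => ?_⟩
  · by_cases h : e ∈ P
    · rw [pathFlow_of_mem _ h]
      exact ⟨pathCap_nonneg fun e he => hc e (hXE (hP.subset he)), pathCap_le h⟩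
    · rw [pathFlow_of_notMem _ h]
      exact ⟨le_rfl, hc e he⟩
  · have hnet := ((isSTPath_iff_of_subset hXE).1 hP).1.flowValue_pathFlow v (pathCap c P)
    rw [Pi.single_eq_of_ne hvs, Pi.single_eq_of_ne hvt, sub_self] at hnet
    exact (sub_eq_zero.1 hnet).symm

/-! ### Path packings and flow decomposition -/

/-- `L` assigns nonnegative weights to the `s`-`t` paths of `E` so that the paths through each arc
`e` have total weight at most `u e`: the path side of flow decomposition. Values of `L` off
`stPaths E s t` are irrelevant. -/
structure IsPathPacking (E : Finset (V × V)) (u : V × V → ℝ) (s t : V)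
    (L : Finset (V × V) → ℝ) : Prop where
  nonneg : ∀ P ∈ stPaths E s t, 0 ≤ L P
  sum_le : ∀ e ∈ E, ∑ P ∈ stPaths E s t with e ∈ P, L P ≤ u e

variable {L : Finset (V × V) → ℝ} {u u' : V × V → ℝ}

theorem IsPathPacking.mono (hL : IsPathPacking E u s t L) (hu : ∀ e ∈ E, u e ≤ u' e) :
    IsPathPacking E u' s t L :=
  ⟨hL.nonneg, fun e he => (hL.sum_le e he).trans (hu e he)⟩

theorem IsPathPacking.le_pathCap (hst : s ≠ t) (hL : IsPathPacking E u s t L)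
    (hP : P ∈ stPaths E s t) : L P ≤ pathCap u P := by
  have hpath := mem_stPaths.1 hP
  obtain ⟨e, he, hue⟩ := exists_eq_pathCap u (hpath.nonempty hst)
  calc L P ≤ ∑ Q ∈ stPaths E s t with e ∈ Q, L Q :=
        single_le_sum (fun Q hQ => hL.nonneg Q (mem_filter.1 hQ).1) (mem_filter.2 ⟨hP, he⟩)
    _ ≤ u e := hL.sum_le e (hpath.subset he)
    _ = pathCap u P := hue

theorem IsPathPacking.add_single {r : ℝ} (hr : 0 ≤ r) (hP : P ∈ stPaths E s t)
    (hL : IsPathPacking E (u - pathFlow r P) s t L) :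
    IsPathPacking E u s t (L + Pi.single P r) := by
  refine ⟨fun Q hQ => add_nonneg (hL.nonneg Q hQ) ?_, fun e he => ?_⟩
  · exact (Pi.single_nonneg (α := fun _ => ℝ) (i := P)).2 hr Q
  · have hload : ∑ Q ∈ stPaths E s t with e ∈ Q, Pi.single P r Q = pathFlow r P e := by
      simp [sum_pi_single', pathFlow, Set.indicator_apply, hP]
    simp only [Pi.add_apply, sum_add_distrib, hload]
    exact le_sub_iff_add_le.1 (hL.sum_le e he)

theorem exists_isPathPacking_of_conservation (hst : s ≠ t) (hf : ∀ e ∈ E, 0 ≤ f e)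
    (hcons : ∀ v, v ≠ s → v ≠ t → flowValue E v f = 0) :
    ∃ L, IsPathPacking E f s t L ∧ flowValue E s f ≤ ∑ P ∈ stPaths E s t, L P := by
  induction hsupp : ({e ∈ E | 0 < f e} : Finset (V × V)) using Finset.strongInduction
    generalizing f with
  | H S ih =>
  subst hsupp
  rcases le_or_gt (flowValue E s f) 0 with hvalue | hvalue
  · exact ⟨0, ⟨fun _ _ => le_rfl, by simpa using hf⟩, by simpa using hvalue⟩
  obtain ⟨P, hPsupp⟩ := exists_isSTPath_of_flowValue_pos hf hcons hvalue
  have hP : IsSTPath E s t P := ((isSTPath_iff_of_subset (filter_subset _ _)).1 hPsupp).1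
  have hcap : 0 ≤ pathCap f P := pathCap_nonneg fun e he => hf e (hP.subset he)
  have hcons' : ∀ v, v ≠ s → v ≠ t → flowValue E v (f - pathFlow (pathCap f P) P) = 0 :=
    fun v hvs hvt => by simp [hP.flowValue_sub_pathFlow, hcons v hvs hvt, hvs, hvt]
  obtain ⟨L, hL, hLvalue⟩ := ih _
    (filter_sub_pathFlow_pathCap_ssubset hPsupp.subset (hP.nonempty hst))
    (sub_pathFlow_pathCap_nonneg hf) hcons' rfl
  refine ⟨L + Pi.single P (pathCap f P), hL.add_single hcap (mem_stPaths.2 hP), ?_⟩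
  rw [hP.flowValue_sub_pathFlow, Pi.single_eq_same, Pi.single_eq_of_ne hst, sub_zero,
    sub_le_iff_le_add] at hLvalue
  simpa [sum_add_distrib, sum_pi_single', mem_stPaths.2 hP] using hLvalue

/-! ### Flow games -/

variable {γ : Finset (V × V) → ℝ}

theorem IsFlowGame.exists_isPathPacking (hγ : IsFlowGame E c s t γ) (hst : s ≠ t) (hXE : X ⊆ E) :
    ∃ L, IsPathPacking X c s t L ∧ γ X ≤ ∑ P ∈ stPaths X s t, L P := by
  obtain ⟨f, ⟨hbound, hzero, hcons⟩, hvalue⟩ := (hγ X hXE).1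
  have hcons' : ∀ v, v ≠ s → v ≠ t → flowValue X v f = 0 := fun v hvs hvt => by
    rw [flowValue_eq_of_subset hXE hzero]
    exact sub_eq_zero.2 (hcons v hvs hvt).symm
  obtain ⟨L, hL, hLvalue⟩ := exists_isPathPacking_of_conservation hst
    (fun e he => (hbound e (hXE he)).1) hcons'
  rw [flowValue_eq_of_subset hXE hzero, hvalue] at hLvalue
  exact ⟨L, hL.mono fun e he => (hbound e (hXE he)).2, hLvalue⟩

theorem IsFlowGame.le_totalPathCap (hγ : IsFlowGame E c s t γ) (hst : s ≠ t) (hXE : X ⊆ E) :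
    γ X ≤ totalPathCap c s t X := by
  obtain ⟨L, hL, hvalue⟩ := hγ.exists_isPathPacking hst hXE
  exact hvalue.trans (sum_le_sum fun P hP => hL.le_pathCap hst hP)

theorem IsFlowGame.nonneg (hγ : IsFlowGame E c s t γ) (hc : ∀ e ∈ E, 0 ≤ c e) (hXE : X ⊆ E) :
    0 ≤ γ X :=
  (hγ X hXE).2 ⟨0, ⟨fun e he => ⟨le_rfl, hc e he⟩, fun _ _ => rfl, by simp⟩, by simp [flowValue]⟩

theorem IsFlowGame.pathCap_le (hγ : IsFlowGame E c s t γ) (hst : s ≠ t) (hc : ∀ e ∈ E, 0 ≤ c e)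
    (hXE : X ⊆ E) (hP : IsSTPath X s t P) : pathCap c P ≤ γ X := by
  refine (hγ X hXE).2 ⟨pathFlow (pathCap c P) P, hP.isFeasibleFlow_pathFlow hXE hc, ?_⟩
  rw [((isSTPath_iff_of_subset hXE).1 hP).1.flowValue_pathFlow, Pi.single_eq_same,
    Pi.single_eq_of_ne hst, sub_zero]

theorem IsFlowGame.totalPathCap_le_of_injOn_fst (hγ : IsFlowGame E c s t γ) (hst : s ≠ t)
    (hc : ∀ e ∈ E, 0 ≤ c e) (hXE : X ⊆ E) (hX : Set.InjOn Prod.fst (X : Set (V × V))) :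
    totalPathCap c s t X ≤ γ X := by
  unfold totalPathCap
  rcases (stPaths X s t).eq_empty_or_nonempty with hempty | ⟨P, hP⟩
  · simpa [hempty] using hγ.nonneg hc hXE
  · have honly : stPaths X s t = {P} := eq_singleton_iff_unique_mem.2
      ⟨hP, fun Q hQ => stPaths_subsingleton_of_injOn_fst hX hQ hP⟩
    simpa [honly] using hγ.pathCap_le hst hc hXE (mem_stPaths.1 hP)

theorem GameConvex.add_le_add_erase_erase (hconv : GameConvex E γ) (hXE : X ⊆ E) {e e' : V × V}
    (he : e ∈ X) (hne : e ≠ e') :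
    γ (X.erase e) + γ (X.erase e') ≤ γ X + γ ((X.erase e).erase e') := by
  have hmarginal := hconv e (hXE he) ((X.erase e).erase e') (X.erase e) (erase_subset _ _)
    (erase_subset_erase _ hXE)
  rw [insert_erase he, erase_right_comm, insert_erase (mem_erase.2 ⟨hne, he⟩)] at hmarginal
  rw [erase_right_comm]
  linarith

theorem IsFlowGame.totalPathCap_le (hγ : IsFlowGame E c s t γ) (hconv : GameConvex E γ)
    (hst : s ≠ t) (hc : ∀ e ∈ E, 0 ≤ c e) (hXE : X ⊆ E) : totalPathCap c s t X ≤ γ X := by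
  induction X using Finset.strongInduction with
  | H X ih =>
  by_cases hX : Set.InjOn Prod.fst (X : Set (V × V))
  · exact hγ.totalPathCap_le_of_injOn_fst hst hc hXE hX
  obtain ⟨e, he, e', he', hfst, hne⟩ : ∃ e ∈ X, ∃ e' ∈ X, e.1 = e'.1 ∧ e ≠ e' := by
    simpa [Set.InjOn] using hX
  have herase := ih _ (erase_ssubset he) ((erase_subset e X).trans hXE)
  have herase' := ih _ (erase_ssubset he') ((erase_subset e' X).trans hXE)
  have hboth : γ ((X.erase e).erase e') ≤ totalPathCap c s t ((X.erase e).erase e') :=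
    hγ.le_totalPathCap hst (((erase_subset _ _).trans (erase_subset _ _)).trans hXE)
  have hmodular := totalPathCap_add_erase_erase (c := c) (s := s) (t := t) (X := X) hne hfst
  have hsuper := hconv.add_le_add_erase_erase hXE he hne
  linarith

theorem IsFlowGame.isPathPacking_pathCap (hγ : IsFlowGame E c s t γ) (hconv : GameConvex E γ)
    (hst : s ≠ t) (hc : ∀ e ∈ E, 0 ≤ c e) : IsPathPacking E c s t (pathCap c) := by
  obtain ⟨L, hL, hvalue⟩ := hγ.exists_isPathPacking hst Subset.rfl
  have hle : ∀ P ∈ stPaths E s t, L P ≤ pathCap c P := fun P hP => hL.le_pathCap hst hP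
  have hsaturated : ∀ P ∈ stPaths E s t, L P = pathCap c P :=
    (sum_eq_sum_iff_of_le hle).1 <| (sum_le_sum hle).antisymm <|
      (hγ.totalPathCap_le hconv hst hc Subset.rfl).trans hvalue
  refine ⟨fun P hP => hsaturated P hP ▸ hL.nonneg P hP, fun e he => ?_⟩
  rw [← sum_congr rfl fun P hP => hsaturated P (mem_filter.1 hP).1]
  exact hL.sum_le e he

theorem IsPathPacking.eq_of_mem_of_eq_pathCap (hst : s ≠ t) (hc : ∀ e ∈ E, 0 < c e)
    (hpack : IsPathPacking E c s t (pathCap c)) (hP : IsSTPath E s t P) (hQ : IsSTPath E s t Q)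
    {e : V × V} (heP : e ∈ P) (heQ : e ∈ Q) (he : c e = pathCap c P) : Q = P := by
  by_contra hne
  have hsub : {Q, P} ⊆ ({R ∈ stPaths E s t | e ∈ R} : Finset (Finset (V × V))) := by
    simp [insert_subset_iff, mem_stPaths, hP, hQ, heP, heQ]
  have hsum : pathCap c Q + pathCap c P ≤ pathCap c P := calc
    pathCap c Q + pathCap c P = ∑ R ∈ {Q, P}, pathCap c R := (sum_pair hne).symm
    _ ≤ ∑ R ∈ stPaths E s t with e ∈ R, pathCap c R :=
      sum_le_sum_of_subset_of_nonneg hsub fun R hR _ => hpack.nonneg R (mem_filter.1 hR).1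
    _ ≤ c e := hpack.sum_le e (hP.subset heP)
    _ = pathCap c P := he
  have hpos : 0 < pathCap c Q := pathCap_pos (hQ.nonempty hst) fun e he => hc e (hQ.subset he)
  linarith

end

theorem bottleneck_disjoint_path_cover_general
    {V : Type*} [DecidableEq V]
    (E : Finset (V × V)) (c : V × V → ℝ) (s t : V) (γ : Finset (V × V) → ℝ)
    (hst : s ≠ t) (hc : ∀ e ∈ E, 0 < c e)
    (hγ : IsFlowGame E c s t γ)
    (hcover : ∀ e ∈ E, ∃ P : Finset (V × V), IsSTPath E s t P ∧ e ∈ P)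
    (hconv : GameConvex E γ) :
    ((stPaths E s t).biUnion (fun P => P) = E) ∧
    (∀ P Q : Finset (V × V), IsSTPath E s t P → IsSTPath E s t Q → P ≠ Q →
      ∀ b : V × V, IsBottleneck E c s t b → ¬ (b ∈ P ∧ b ∈ Q)) ∧
    (∀ P : Finset (V × V), IsSTPath E s t P →
      ∃ b ∈ P, IsBottleneck E c s t b ∧
        ∀ Q : Finset (V × V), IsSTPath E s t Q → b ∈ Q → Q = P) := by
  have hpack := hγ.isPathPacking_pathCap hconv hst fun e he => (hc e he).le
  refine ⟨biUnion_stPaths_eq hcover, ?_, fun P hP => ?_⟩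
  · rintro P Q hP hQ hne b ⟨R, hR, hbR, hb⟩ ⟨hbP, hbQ⟩
    have hPR : P = R := hpack.eq_of_mem_of_eq_pathCap hst hc hR hP hbR hbP hb
    have hQR : Q = R := hpack.eq_of_mem_of_eq_pathCap hst hc hR hQ hbR hbQ hb
    exact hne (hPR.trans hQR.symm)
  · obtain ⟨b, hbP, hb⟩ := exists_eq_pathCap c (hP.nonempty hst)
    exact ⟨b, hbP, ⟨P, hP, hbP, hb⟩, fun Q hQ hbQ =>
      hpack.eq_of_mem_of_eq_pathCap hst hc hP hQ hbP hbQ hb⟩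

/-- Bottleneck-disjoint path cover.  If every arc lies on some `s`-`t`
path and the flow game is convex, then the `s`-`t` paths cover all arcs, no two distinct
`s`-`t` paths share a bottleneck arc, and every `s`-`t` path contains a bottleneck arc
through which it is the unique `s`-`t` path. -/
theorem bottleneck_disjoint_path_cover
    {V : Type*} [Fintype V] [DecidableEq V]
    (E : Finset (V × V)) (c : V × V → ℝ) (s t : V) (γ : Finset (V × V) → ℝ)
    (hst : s ≠ t) (hc : ∀ e ∈ E, 0 < c e)
    (hγ : IsFlowGame E c s t γ)
    (hcover : ∀ e ∈ E, ∃ P : Finset (V × V), IsSTPath E s t P ∧ e ∈ P)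
    (hconv : GameConvex E γ) :
    ((stPaths E s t).biUnion (fun P => P) = E) ∧
    (∀ P Q : Finset (V × V), IsSTPath E s t P → IsSTPath E s t Q → P ≠ Q →
      ∀ b : V × V, IsBottleneck E c s t b → ¬ (b ∈ P ∧ b ∈ Q)) ∧
    (∀ P : Finset (V × V), IsSTPath E s t P →
      ∃ b ∈ P, IsBottleneck E c s t b ∧
        ∀ Q : Finset (V × V), IsSTPath E s t Q → b ∈ Q → Q = P) :=
  bottleneck_disjoint_path_cover_general E c s t γ hst hc hγ hcover hconv
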